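/- For cubic regression (k = 4) on [−1,1] with constant weight v ≡ 1 and any r ∈ [0, 5/6], the design ξ = r·λ̃ + (1/6 − r/10)(δ_{−1} + δ_1) + (1/3 − 2r/5)(δ_{−1/2} + δ_{1/2}) is e_4-optimal in Υ[r], i.e., it minimizes e_4ᵀ M(·)⁻¹ e_4 over Υ[r]. (Example 3.4(c)) -/

import Mathlib

/-!
Let `c = (0, -3/4, 0, 1)`, so that `cᵀ f(x) = x³ - (3/4) x` is the monic Chebyshev polynomial of
degree three. Its square `g` satisfies `g ≤ 1/16` on `[-1, 1]`, with equality at `±1, ±1/2`.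

* For every `η` with invertible moment matrix `M`, the Cauchy-Schwarz inequality
  `1 = (cᵀ e₄)² ≤ (cᵀ M c) (e₄ᵀ M⁻¹ e₄)` bounds the criterion below by `1 / ∫ g dη`
  (`one_le_quadForm_mul_inv`).
* If moreover `r λ̃ ≤ η`, then integrating `1/16 - g ≥ 0` gives
  `∫ (1/16 - g) dη ≥ r ∫ (1/16 - g) dλ̃ = 9r/280`, so `∫ g dη ≤ 1/16 - 9r/280`
  (`integral_cheb_le`).
* For the design of the theorem, `M c = (1/16 - 9r/280) e₄`, so its criterion value is exactly
  `1 / (1/16 - 9r/280)`.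
-/

set_option autoImplicit false

open MeasureTheory Set ENNReal

/-- The uniform (normalized Lebesgue) distribution on `[-1, 1]`. -/
noncomputable def unif : Measure ℝ := (2 : ℝ≥0∞)⁻¹ • volume.restrict (Icc (-1) 1)

/-- Membership in the class `Ξ` of designs on `[-1,1]`: probability measures that are a finite
sum of point masses (in `[-1,1]`) plus a part absolutely continuous with respect to Lebesgue
measure with a density of bounded variation. -/
def MemXi (ξ : Measure ℝ) : Prop :=
  IsProbabilityMeasure ξ ∧
  ∃ (s : Finset ℝ) (w : ℝ → ℝ≥0∞) (d : ℝ → ℝ),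
    (↑s : Set ℝ) ⊆ Icc (-1) 1 ∧
    BoundedVariationOn d (Icc (-1) 1) ∧ (∀ x, 0 ≤ d x) ∧
    ξ = (∑ t ∈ s, w t • Measure.dirac t)
        + (volume.restrict (Icc (-1) 1)).withDensity (fun x => ENNReal.ofReal (d x))

/-- The measure `v·λ̃` with density `v` with respect to the uniform distribution on `[-1,1]`. -/
noncomputable def vMeas (v : ℝ → ℝ) : Measure ℝ :=
  unif.withDensity fun x => ENNReal.ofReal (v x)

/-- Membership in `Υ_v[r] = {ξ ∈ Ξ : r·(v·λ̃) ≤ ξ}`. -/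
def MemUps (v : ℝ → ℝ) (r : ℝ) (ξ : Measure ℝ) : Prop :=
  MemXi ξ ∧ ENNReal.ofReal r • vMeas v ≤ ξ

/-- The moment (information) matrix `M(ξ) = ∫ f fᵀ dξ` for polynomial regression
`f(x) = (1, x, …, x^{k-1})ᵀ`. -/
noncomputable def designMatrix (k : ℕ) (ξ : Measure ℝ) : Matrix (Fin k) (Fin k) ℝ :=
  Matrix.of fun i j => ∫ x, x ^ ((i : ℕ) + (j : ℕ)) ∂ξ

/-- The index `k-1` (corresponding to `e_k`) in `Fin k`. -/
def lastIdx (k : ℕ) (hk : 0 < k) : Fin k := ⟨k - 1, Nat.sub_lt hk one_pos⟩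

/-- `ξ` is `e_k`-optimal in `Υ_v[r]`: `M(ξ)` is invertible and `e_kᵀ M(ξ)⁻¹ e_k` is minimal
among all `η ∈ Υ_v[r]` with invertible moment matrix. -/
def EkOptimal (k : ℕ) (hk : 0 < k) (v : ℝ → ℝ) (r : ℝ) (ξ : Measure ℝ) : Prop :=
  MemUps v r ξ ∧ (designMatrix k ξ).det ≠ 0 ∧
  ∀ η : Measure ℝ, MemUps v r η → (designMatrix k η).det ≠ 0 →
    (designMatrix k ξ)⁻¹ (lastIdx k hk) (lastIdx k hk)
      ≤ (designMatrix k η)⁻¹ (lastIdx k hk) (lastIdx k hk)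

/-- The polynomial `y ↦ e_kᵀ M(ξ)⁻¹ f(y)` with `f(y) = (1, y, …, y^{k-1})ᵀ`. -/
noncomputable def ekPoly (k : ℕ) (hk : 0 < k) (ξ : Measure ℝ) (y : ℝ) : ℝ :=
  ((designMatrix k ξ)⁻¹.mulVec fun i : Fin k => y ^ (i : ℕ)) (lastIdx k hk)

/-- The design of the theorem. -/
noncomputable def cubicDesign (r : ℝ) : Measure ℝ :=
  ENNReal.ofReal r • unif
    + ENNReal.ofReal (1 / 6 - r / 10) • (Measure.dirac (-1) + Measure.dirac 1)
    + ENNReal.ofReal (1 / 3 - 2 * r / 5) •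
        (Measure.dirac (-(1 / 2)) + Measure.dirac (1 / 2))

/-- The coefficient vector of `x³ - (3/4) x`, the monic Chebyshev polynomial of degree three. -/
noncomputable def chebCoeff : Fin 4 → ℝ := ![0, -(3 / 4), 0, 1]

lemma vMeas_one : vMeas (fun _ => (1 : ℝ)) = unif := by
  simp [vMeas]

instance : IsFiniteMeasure unif := by
  refine ⟨?_⟩
  simp [unif, ENNReal.mul_lt_top_iff]

lemma integral_pow_unif (n : ℕ) :
    ∫ x, x ^ n ∂unif = (1 - (-1) ^ (n + 1)) / (2 * (n + 1)) := by
  rw [unif, integral_smul_measure, integral_Icc_eq_integral_Ioc,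
    ← intervalIntegral.integral_of_le (by norm_num), integral_pow]
  simp only [ENNReal.toReal_inv, ENNReal.toReal_ofNat, smul_eq_mul, one_pow]
  field_simp

/-- Continuous functions are integrable for finite measures carried by `[-1, 1]`. -/
lemma integrable_of_ae_mem_Icc {μ : Measure ℝ} [IsFiniteMeasure μ]
    (h : ∀ᵐ x ∂μ, x ∈ Icc (-1 : ℝ) 1) {g : ℝ → ℝ} (hg : Continuous g) : Integrable g μ := by
  have h1 : IntegrableOn g (Icc (-1) 1) μ := hg.continuousOn.integrableOn_compact isCompact_Icc
  rwa [IntegrableOn, Measure.restrict_eq_self_of_ae_mem h] at h1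

lemma unif_ae_mem : ∀ᵐ x ∂unif, x ∈ Icc (-1 : ℝ) 1 := by
  exact Measure.ae_smul_measure (ae_restrict_mem measurableSet_Icc) _

lemma MemXi.ae_mem {ξ : Measure ℝ} (h : MemXi ξ) : ∀ᵐ x ∂ξ, x ∈ Icc (-1 : ℝ) 1 := by
  obtain ⟨-, s, w, d, hs, -, -, rfl⟩ := h
  rw [ae_add_measure_iff]
  constructor
  · rw [ae_iff, Measure.finsetSum_apply, Finset.sum_eq_zero]
    intro t ht
    have : t ∈ Icc (-1 : ℝ) 1 := hs ht
    have hm : MeasurableSet {a : ℝ | ¬ a ∈ Icc (-1 : ℝ) 1} := measurableSet_Icc.compl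
    rw [Measure.smul_apply, Measure.dirac_apply' _ hm, indicator_of_notMem (by simpa using this)]
    simp
  · exact (withDensity_absolutelyContinuous _ _).ae_le (ae_restrict_mem measurableSet_Icc)

/-- The quadratic form of the moment matrix is `v ↦ ∫ (vᵀ f)²`, hence nonnegative. -/
lemma quadForm_nonneg {η : Measure ℝ} [IsFiniteMeasure η]
    (h : ∀ᵐ x ∂η, x ∈ Icc (-1 : ℝ) 1) (v : Fin 4 → ℝ) :
    0 ≤ v ⬝ᵥ (designMatrix 4 η).mulVec v := by
  have key : v ⬝ᵥ (designMatrix 4 η).mulVec v = ∫ x, (∑ i, v i * x ^ (i : ℕ)) ^ 2 ∂η := by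
    have e : ∀ x : ℝ, (∑ i, v i * x ^ (i : ℕ)) ^ 2
        = ∑ i : Fin 4, ∑ j : Fin 4, (v i * v j) * x ^ ((i : ℕ) + j) := by
      intro x
      rw [sq, Finset.sum_mul_sum]
      refine Finset.sum_congr rfl fun i _ => Finset.sum_congr rfl fun j _ => ?_
      ring
    have hi : ∀ i j : Fin 4, Integrable (fun x : ℝ => (v i * v j) * x ^ ((i : ℕ) + j)) η :=
      fun i j => integrable_of_ae_mem_Icc h (by fun_prop)
    simp_rw [e]
    rw [integral_finsetSum _ fun i _ => integrable_finsetSum _ fun j _ => hi i j]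
    simp only [dotProduct, Matrix.mulVec, Finset.mul_sum]
    refine Finset.sum_congr rfl fun i _ => ?_
    rw [integral_finsetSum _ fun j _ => hi i j]
    refine Finset.sum_congr rfl fun j _ => ?_
    rw [integral_const_mul, designMatrix, Matrix.of_apply]
    ring
  rw [key]
  exact integral_nonneg fun x => sq_nonneg _

lemma designMatrix_isSymm (η : Measure ℝ) : (designMatrix 4 η).IsSymm := by
  ext i j
  simp [designMatrix, add_comm]

/-- Cauchy-Schwarz for a nonnegative symmetric form: `(cᵀ e₄)² ≤ (cᵀ M c) (e₄ᵀ M⁻¹ e₄)`. -/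
lemma one_le_quadForm_mul_inv {M : Matrix (Fin 4) (Fin 4) ℝ} (hs : M.IsSymm)
    (hM : ∀ v, 0 ≤ v ⬝ᵥ M.mulVec v) (hdet : M.det ≠ 0) {c : Fin 4 → ℝ} (hc : c 3 = 1) :
    1 ≤ (c ⬝ᵥ M.mulVec c) * M⁻¹ 3 3 := by
  set e : Fin 4 → ℝ := Pi.single 3 1 with he
  set u := M⁻¹.mulVec e with hu
  have hMu : M.mulVec u = e := by
    rw [hu, Matrix.mulVec_mulVec, Matrix.mul_nonsing_inv _ (isUnit_iff_ne_zero.mpr hdet),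
      Matrix.one_mulVec]
  have h1 : c ⬝ᵥ M.mulVec u = 1 := by simp [hMu, he, hc]
  have h2 : u ⬝ᵥ M.mulVec c = 1 := by
    rw [Matrix.dotProduct_mulVec, ← Matrix.mulVec_transpose, hs.eq, dotProduct_comm, h1]
  have h3 : u ⬝ᵥ M.mulVec u = M⁻¹ 3 3 := by
    rw [hMu, he]
    simp [hu, he]
  -- `(t u - c)ᵀ M (t u - c)` is a nonnegative quadratic polynomial in `t`
  have h4 : ∀ t : ℝ, 0 ≤ M⁻¹ 3 3 * (t * t) + (-2) * t + c ⬝ᵥ M.mulVec c := by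
    intro t
    have := hM (t • u - c)
    simp only [Matrix.mulVec_sub, Matrix.mulVec_smul, sub_dotProduct, dotProduct_sub,
      smul_dotProduct, dotProduct_smul, smul_eq_mul, h1, h2, h3] at this
    linarith
  have h5 := discrim_le_zero h4
  rw [discrim] at h5
  linarith

lemma quadForm_chebCoeff (η : Measure ℝ) :
    chebCoeff ⬝ᵥ (designMatrix 4 η).mulVec chebCoeff
      = ∫ x, x ^ 6 ∂η - 3 / 2 * ∫ x, x ^ 4 ∂η + 9 / 16 * ∫ x, x ^ 2 ∂η := by
  simp [chebCoeff, designMatrix, dotProduct, Matrix.mulVec, Fin.sum_univ_four]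
  ring

/-- On `[-1, 1]` one has `(x³ - (3/4) x)² ≤ 1/16`; integrating the difference against
`r λ̃ ≤ η` bounds the second moment of the Chebyshev polynomial. -/
lemma integral_cheb_le {r : ℝ} (hr : 0 ≤ r) {η : Measure ℝ} [IsProbabilityMeasure η]
    (h : ∀ᵐ x ∂η, x ∈ Icc (-1 : ℝ) 1) (hle : ENNReal.ofReal r • unif ≤ η) :
    ∫ x, x ^ 6 ∂η - 3 / 2 * ∫ x, x ^ 4 ∂η + 9 / 16 * ∫ x, x ^ 2 ∂η
      ≤ 1 / 16 - 9 * r / 280 := by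
  have expand : ∀ μ : Measure ℝ, IsFiniteMeasure μ → (∀ᵐ x ∂μ, x ∈ Icc (-1 : ℝ) 1) →
      ∫ x, (1 / 16 * x ^ 0 - x ^ 6 + 3 / 2 * x ^ 4 - 9 / 16 * x ^ 2) ∂μ
        = 1 / 16 * ∫ x, x ^ 0 ∂μ - ∫ x, x ^ 6 ∂μ + 3 / 2 * ∫ x, x ^ 4 ∂μ
          - 9 / 16 * ∫ x, x ^ 2 ∂μ := by
    intro μ _ hμ
    have I : ∀ {g : ℝ → ℝ}, Continuous g → Integrable g μ := integrable_of_ae_mem_Icc hμ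
    rw [integral_sub (I (by fun_prop)) (I (by fun_prop)),
      integral_add (I (by fun_prop)) (I (by fun_prop)),
      integral_sub (I (by fun_prop)) (I (by fun_prop)),
      integral_const_mul, integral_const_mul, integral_const_mul]
  have hmono : ∫ x, (1 / 16 * x ^ 0 - x ^ 6 + 3 / 2 * x ^ 4 - 9 / 16 * x ^ 2)
        ∂(ENNReal.ofReal r • unif)
      ≤ ∫ x, (1 / 16 * x ^ 0 - x ^ 6 + 3 / 2 * x ^ 4 - 9 / 16 * x ^ 2) ∂η := by
    refine integral_mono_measure hle ?_ (integrable_of_ae_mem_Icc h (by fun_prop))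
    filter_upwards [h] with x hx
    -- the difference is `(1 - x²) (x² - 1/4)²`
    have h1 : 0 ≤ 1 - x ^ 2 := by nlinarith [hx.1, hx.2]
    have h2 := mul_nonneg h1 (sq_nonneg (x ^ 2 - 1 / 4))
    simp only [Pi.zero_apply]
    nlinarith
  rw [integral_smul_measure, expand _ inferInstance unif_ae_mem, expand η inferInstance h,
    ENNReal.toReal_ofReal hr] at hmono
  simp only [integral_pow_unif] at hmono
  norm_num at hmono
  linarith

lemma integral_pow_cubicDesign {r : ℝ} (hr : r ∈ Icc (0 : ℝ) (5 / 6)) (n : ℕ) :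
    ∫ x, x ^ n ∂(cubicDesign r) = r * ((1 - (-1) ^ (n + 1)) / (2 * (n + 1)))
      + (1 / 6 - r / 10) * ((-1) ^ n + 1)
      + (1 / 3 - 2 * r / 5) * ((-(1 / 2)) ^ n + (1 / 2) ^ n) := by
  have h0 : Integrable (fun x : ℝ => x ^ n) unif :=
    integrable_of_ae_mem_Icc unif_ae_mem (by fun_prop)
  have hd : ∀ a : ℝ, Integrable (fun x : ℝ => x ^ n) (Measure.dirac a) := fun a =>
    integrable_dirac (by simp)
  have ha : 0 ≤ 1 / 6 - r / 10 := by linarith [hr.2]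
  have hb : 0 ≤ 1 / 3 - 2 * r / 5 := by linarith [hr.2]
  have i1 := h0.smul_measure (c := ENNReal.ofReal r) ofReal_ne_top
  have i2 := ((hd (-1)).add_measure (hd 1)).smul_measure
    (c := ENNReal.ofReal (1 / 6 - r / 10)) ofReal_ne_top
  have i3 := ((hd (-(1 / 2))).add_measure (hd (1 / 2))).smul_measure
    (c := ENNReal.ofReal (1 / 3 - 2 * r / 5)) ofReal_ne_top
  rw [cubicDesign, integral_add_measure (i1.add_measure i2) i3, integral_add_measure i1 i2,
    integral_smul_measure, integral_smul_measure, integral_smul_measure,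
    integral_add_measure (hd _) (hd _), integral_add_measure (hd _) (hd _),
    integral_pow_unif, integral_dirac, integral_dirac, integral_dirac, integral_dirac,
    ENNReal.toReal_ofReal hr.1, ENNReal.toReal_ofReal ha, ENNReal.toReal_ofReal hb]
  simp only [smul_eq_mul, one_pow]

lemma designMatrix_cubicDesign {r : ℝ} (hr : r ∈ Icc (0 : ℝ) (5 / 6)) :
    designMatrix 4 (cubicDesign r) =
      !![1, 0, 1 / 2 - r / 15, 0;
         0, 1 / 2 - r / 15, 0, 3 / 8 - r / 20;
         1 / 2 - r / 15, 0, 3 / 8 - r / 20, 0;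
         0, 3 / 8 - r / 20, 0, 11 / 32 - 39 * r / 560] := by
  ext i j
  rw [designMatrix, Matrix.of_apply, integral_pow_cubicDesign hr]
  fin_cases i <;> fin_cases j <;> norm_num <;> ring

lemma det_cubicDesign {r : ℝ} (hr : r ∈ Icc (0 : ℝ) (5 / 6)) :
    (designMatrix 4 (cubicDesign r)).det ≠ 0 := by
  obtain ⟨h0, h1⟩ := hr
  have e : (designMatrix 4 (cubicDesign r)).det
      = (1 / 8 + r / 60 - r ^ 2 / 225) * ((1 / 2 - r / 15) * (1 / 16 - 9 * r / 280)) := by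
    rw [designMatrix_cubicDesign ⟨h0, h1⟩]
    simp [Matrix.det_succ_row_zero, Fin.sum_univ_succ, Fin.succAbove]
    ring
  rw [e]
  have p1 : 0 < 1 / 8 + r / 60 - r ^ 2 / 225 := by nlinarith
  have p2 : 0 < 1 / 2 - r / 15 := by linarith
  have p3 : 0 < 1 / 16 - 9 * r / 280 := by linarith
  positivity

/-- Since `M c = (1/16 - 9r/280) e₄`, the last column of `M⁻¹` is a multiple of `c`. -/
lemma inv_cubicDesign {r : ℝ} (hr : r ∈ Icc (0 : ℝ) (5 / 6)) :
    (1 / 16 - 9 * r / 280) * (designMatrix 4 (cubicDesign r))⁻¹ 3 3 = 1 := by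
  have hdet := det_cubicDesign hr
  set M := designMatrix 4 (cubicDesign r) with hMdef
  have hMc : M.mulVec chebCoeff = (1 / 16 - 9 * r / 280) • Pi.single 3 1 := by
    rw [hMdef, designMatrix_cubicDesign hr]
    ext i
    fin_cases i <;> simp [chebCoeff, Matrix.mulVec, dotProduct, Fin.sum_univ_four] <;> ring
  have h := congrArg (fun v => M⁻¹.mulVec v 3) hMc
  simp only [Matrix.mulVec_mulVec, Matrix.nonsing_inv_mul _ (isUnit_iff_ne_zero.mpr hdet),
    Matrix.one_mulVec, Matrix.mulVec_smul, Pi.smul_apply, smul_eq_mul] at h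
  simpa [chebCoeff] using h.symm

lemma memXi_cubicDesign {r : ℝ} (hr : r ∈ Icc (0 : ℝ) (5 / 6)) : MemXi (cubicDesign r) := by
  have ha : 0 ≤ 1 / 6 - r / 10 := by linarith [hr.2]
  have hb : 0 ≤ 1 / 3 - 2 * r / 5 := by linarith [hr.2]
  have hr0 := hr.1
  constructor
  · refine ⟨?_⟩
    have hu : unif univ = 1 := by
      simp only [unif, Measure.smul_apply, Measure.restrict_apply_univ, Real.volume_Icc,
        smul_eq_mul]
      norm_num
      exact ENNReal.inv_mul_cancel (by norm_num) (by norm_num)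
    have h2 : (1 : ℝ≥0∞) + 1 = ENNReal.ofReal 2 := by norm_num
    simp only [cubicDesign, Measure.add_apply, Measure.smul_apply, smul_eq_mul, hu, measure_univ,
      mul_one, h2]
    rw [← ENNReal.ofReal_mul ha, ← ENNReal.ofReal_mul hb, ← ENNReal.ofReal_add hr0 (by positivity),
      ← ENNReal.ofReal_add (by positivity) (by positivity), ENNReal.ofReal_eq_one]
    ring
  · refine ⟨{-1, 1, -(1 / 2), 1 / 2}, fun t => if t ^ 2 = 1 then ENNReal.ofReal (1 / 6 - r / 10)
      else ENNReal.ofReal (1 / 3 - 2 * r / 5), fun _ => r / 2, ?_, ?_, ?_, ?_⟩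
    · intro x hx
      simp only [Finset.coe_insert, Finset.coe_singleton, mem_insert_iff, mem_singleton_iff] at hx
      rcases hx with rfl | rfl | rfl | rfl <;> constructor <;> norm_num
    · simp [BoundedVariationOn, eVariationOn.constant_on]
    · intro _; positivity
    · have hd : ENNReal.ofReal (r / 2) = ENNReal.ofReal r * 2⁻¹ := by
        rw [ENNReal.ofReal_div_of_pos (by norm_num), div_eq_mul_inv]
        norm_num
      rw [Finset.sum_insert (by norm_num), Finset.sum_insert (by norm_num),
        Finset.sum_insert (by norm_num), Finset.sum_singleton, withDensity_const, hd, mul_smul,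
        ← unif, cubicDesign]
      norm_num
      abel

/-- **Example 3.4(c)**: for cubic regression (`k = 4`) with constant weight `v ≡ 1`
and any `r ∈ [0, 5/6]`, the design
`ξ = r·λ̃ + (1/6 - r/10)(δ_{-1} + δ_1) + (1/3 - 2r/5)(δ_{-1/2} + δ_{1/2})`
is `e_4`-optimal in `Υ[r]`. -/
theorem ekOptimal_cubic (r : ℝ) (hr : r ∈ Icc (0 : ℝ) (5 / 6)) :
    EkOptimal 4 four_pos (fun _ => (1 : ℝ)) r
      (ENNReal.ofReal r • unif
        + ENNReal.ofReal (1 / 6 - r / 10) • (Measure.dirac (-1) + Measure.dirac 1)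
        + ENNReal.ofReal (1 / 3 - 2 * r / 5) •
            (Measure.dirac (-(1 / 2)) + Measure.dirac (1 / 2))) := by
  change EkOptimal 4 four_pos (fun _ => (1 : ℝ)) r (cubicDesign r)
  refine ⟨⟨memXi_cubicDesign hr, ?_⟩, det_cubicDesign hr, ?_⟩
  · rw [vMeas_one, cubicDesign, add_assoc]
    exact Measure.le_add_right le_rfl
  · rintro η ⟨hη, hle⟩ hdet
    rw [vMeas_one] at hle
    have : IsProbabilityMeasure η := hη.1
    change (designMatrix 4 (cubicDesign r))⁻¹ 3 3 ≤ (designMatrix 4 η)⁻¹ 3 3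
    have hnn := quadForm_nonneg hη.ae_mem
    have h1 := one_le_quadForm_mul_inv (designMatrix_isSymm η) hnn hdet
      (c := chebCoeff) (by simp [chebCoeff])
    have hA := hnn chebCoeff
    have hub : chebCoeff ⬝ᵥ (designMatrix 4 η).mulVec chebCoeff ≤ 1 / 16 - 9 * r / 280 := by
      rw [quadForm_chebCoeff]
      exact integral_cheb_le hr.1 hη.ae_mem hle
    have h2 := inv_cubicDesign hr
    have hpos : 0 < 1 / 16 - 9 * r / 280 := by linarith [hr.2]
    have hB : 0 ≤ (designMatrix 4 η)⁻¹ 3 3 := by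
      by_contra! hneg
      nlinarith
    refine le_of_mul_le_mul_left ?_ hpos
    rw [h2]
    exact h1.trans (mul_le_mul_of_nonneg_right hub hB)
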